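/- arXiv:2401.15728 — 2 statements merged into one kernel-verified Lean document; each statement's English description precedes it below -/
import Mathlib

section
/- Fix T₁ < T₂ with the covariance matrix Σ(T₁,T₂) positive definite, assume γ(u) > 0 for u ∈ [T₁,T₂], and let y, z ∈ ℝ. Then the first-order correction to the 1M SOFR futures value at time T₁ is: ∫∫_{ℝ²} (ζ − z) · G₁(y,z,T₁; η,ζ,T₂) dη dζ = ∫_{T₁}^{T₂} [ R⁺(y,T₁,t₁) − R⁻(y,T₁,t₁) + R₁*(t₁) ] dt₁ − μ*(y,T₁,T₂); in particular the argument shifts Δy, Δz appearing in G₁ have no effect on this value. -/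
open MeasureTheory Real

/-- Mean reversion factor `φ_r(t,v) = exp(−∫_t^v α)`. -/
noncomputable def phiR (α : ℝ → ℝ) (t v : ℝ) : ℝ := Real.exp (-(∫ u in t..v, α u))

/-- Variance of the short-rate factor `Σ_rr(t,v)`. -/
noncomputable def Srr (α σ : ℝ → ℝ) (t v : ℝ) : ℝ := ∫ u in t..v, (phiR α u v) ^ 2 * (σ u) ^ 2

/-- Smile dispersion factor `ψ_r(t,v)`. -/
noncomputable def psiR (α σ γ : ℝ → ℝ) (t v : ℝ) : ℝ :=
  Real.exp ((1 / 2) * (γ v) ^ 2 * Srr α σ t v)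

/-- Rate–integral covariance `Σ_rz(t,v)`. -/
noncomputable def Srz (α σ γ : ℝ → ℝ) (t v : ℝ) : ℝ :=
  ∫ u in t..v, psiR α σ γ t u * phiR α u v * Srr α σ t u

/-- Variance of the compounding variable `Σ_zz(t,v)`. -/
noncomputable def Szz (α σ γ : ℝ → ℝ) (t v : ℝ) : ℝ :=
  2 * ∫ u in t..v, psiR α σ γ t u * Srz α σ γ t u

/-- `B*(t,v) = ∫_t^v ψ_r(t,u) φ_r(t,u) du`. -/
noncomputable def Bstar (α σ γ : ℝ → ℝ) (t v : ℝ) : ℝ :=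
  ∫ u in t..v, psiR α σ γ t u * phiR α t u

/-- Drift of the compounding variable `μ*(y,t,v)`. -/
noncomputable def muStar (α σ γ : ℝ → ℝ) (y t v : ℝ) : ℝ :=
  Bstar α σ γ t v * (y + Srz α σ γ 0 t) + (1 / 2) * (Bstar α σ γ t v) ^ 2 * Srr α σ 0 t

/-- One-dimensional Gaussian density with mean `m` and variance `s`. -/
noncomputable def gauss (x m s : ℝ) : ℝ :=
  (Real.sqrt (2 * Real.pi * s))⁻¹ * Real.exp (-(x - m) ^ 2 / (2 * s))

/-- Centered bivariate Gaussian density with covariance `!![srr, srz; srz, szz]` at `(a, b)`. -/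
noncomputable def gauss2 (a b srr srz szz : ℝ) : ℝ :=
  (2 * Real.pi * Real.sqrt (srr * szz - srz ^ 2))⁻¹ *
    Real.exp (-(szz * a ^ 2 - 2 * srz * a * b + srr * b ^ 2) / (2 * (srr * szz - srz ^ 2)))

/-- The leading-order (Hull–White) Green's function `G₀`. -/
noncomputable def G0 (α σ γ : ℝ → ℝ) (y z t η ζ v : ℝ) : ℝ :=
  gauss2 (η - phiR α t v * y) (ζ - z - muStar α σ γ y t v)
    (Srr α σ t v) (Srz α σ γ t v) (Szz α σ γ t v)


/-- The smile factor `R⁺(y,t,u)`. -/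
noncomputable def Rplus (α σ γ ystar : ℝ → ℝ) (y t u : ℝ) : ℝ :=
  Real.exp ((1 / 2) * (γ u) ^ 2 * Srr α σ t u + γ u * (phiR α t u * y + ystar u)) / (2 * γ u)

/-- The smile factor `R⁻(y,t,u)`. -/
noncomputable def Rminus (α σ γ ystar : ℝ → ℝ) (y t u : ℝ) : ℝ :=
  Real.exp ((1 / 2) * (γ u) ^ 2 * Srr α σ t u - γ u * (phiR α t u * y + ystar u)) / (2 * γ u)

/-- The argument shift `Δy(t,u)`. -/
noncomputable def dY (α σ γ : ℝ → ℝ) (t u : ℝ) : ℝ := γ u * Srr α σ t u / phiR α t u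

/-- The argument shift `Δz(t,u)`. -/
noncomputable def dZ (α σ γ : ℝ → ℝ) (t u : ℝ) : ℝ :=
  γ u * Srz α σ γ t u - Bstar α σ γ t u * dY α σ γ t u

/-- `∂_z G₀` in the backward variable `z`. -/
noncomputable def dzG0 (α σ γ : ℝ → ℝ) (y z t η ζ v : ℝ) : ℝ :=
  deriv (fun z' => G0 α σ γ y z' t η ζ v) z

/-- `∂_y ∂_z G₀` in the backward variables. -/
noncomputable def dydzG0 (α σ γ : ℝ → ℝ) (y z t η ζ v : ℝ) : ℝ :=
  deriv (fun y' => dzG0 α σ γ y' z t η ζ v) y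

/-- `∂_z² G₀` in the backward variable `z`. -/
noncomputable def dzzG0 (α σ γ : ℝ → ℝ) (y z t η ζ v : ℝ) : ℝ :=
  deriv (fun z' => dzG0 α σ γ y z' t η ζ v) z

/-- The first-order Green's function correction `G₁`. -/
noncomputable def G1 (α σ γ ystar R1star : ℝ → ℝ) (y z t η ζ v : ℝ) : ℝ :=
  (∫ t₁ in t..v,
      (Rplus α σ γ ystar y t t₁ *
          dzG0 α σ γ (y + dY α σ γ t t₁) (z + dZ α σ γ t t₁) t η ζ v
        - Rminus α σ γ ystar y t t₁ *
            dzG0 α σ γ (y - dY α σ γ t t₁) (z - dZ α σ γ t t₁) t η ζ v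
        + R1star t₁ * dzG0 α σ γ y z t η ζ v))
    - muStar α σ γ y t v * dzG0 α σ γ y z t η ζ v
    - (Srz α σ γ t v / phiR α t v) *
        (dydzG0 α σ γ y z t η ζ v - Bstar α σ γ t v * dzzG0 α σ γ y z t η ζ v)
    - Szz α σ γ t v * dzzG0 α σ γ y z t η ζ v


/-- `f` is integrable over the real line with integral `c`. -/
def IntegratesTo (f : ℝ → ℝ) (c : ℝ) : Prop := Integrable f ∧ ∫ x, f x = c

namespace IntegratesTo

variable {f g : ℝ → ℝ} {c d : ℝ}

lemma add (hf : IntegratesTo f c) (hg : IntegratesTo g d) :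
    IntegratesTo (fun x => f x + g x) (c + d) :=
  ⟨hf.1.add hg.1, by rw [integral_add hf.1 hg.1, hf.2, hg.2]⟩

lemma sub (hf : IntegratesTo f c) (hg : IntegratesTo g d) :
    IntegratesTo (fun x => f x - g x) (c - d) :=
  ⟨hf.1.sub hg.1, by rw [integral_sub hf.1 hg.1, hf.2, hg.2]⟩

lemma const_mul (hf : IntegratesTo f c) (k : ℝ) : IntegratesTo (fun x => k * f x) (k * c) :=
  ⟨hf.1.const_mul k, by rw [integral_const_mul, hf.2]⟩

lemma comp_sub_right (hf : IntegratesTo f c) (a : ℝ) : IntegratesTo (fun x => f (x - a)) c :=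
  ⟨hf.1.comp_sub_right a, by rw [integral_sub_right_eq_self f a, hf.2]⟩

lemma congr (hf : IntegratesTo f c) (hfg : ∀ x, g x = f x) (hcd : d = c) : IntegratesTo g d := by
  rw [funext hfg, hcd]; exact hf

/-- Integrating a weighted family of translates of `f` against a parameter. -/
lemma intervalIntegral_translates (hf : IntegratesTo f c) {A n : ℝ → ℝ} {a b : ℝ} (hab : a ≤ b)
    (hA : ContinuousOn A (Set.Icc a b)) (hn : Continuous n) :
    IntegratesTo (fun x => ∫ t in a..b, A t * f (x - n t)) ((∫ t in a..b, A t) * c) := by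
  have hA' : Integrable A (volume.restrict (Set.Ioc a b)) :=
    (hA.integrableOn_Icc).mono_set Set.Ioc_subset_Icc_self
  have hshear : MeasurePreserving (fun p : ℝ × ℝ => (p.1, p.2 - n p.1))
      ((volume.restrict (Set.Ioc a b)).prod volume)
      ((volume.restrict (Set.Ioc a b)).prod volume) :=
    (MeasurePreserving.id _).skew_product (g := fun t x => x - n t)
      (by unfold Function.uncurry; fun_prop)
      (Filter.Eventually.of_forall fun t => (measurePreserving_sub_right volume (n t)).map_eq)
  have hint : Integrable (fun p : ℝ × ℝ => A p.1 * f (p.2 - n p.1))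
      ((volume.restrict (Set.Ioc a b)).prod volume) :=
    hshear.integrable_comp_of_integrable (hA'.mul_prod hf.1)
  simp only [intervalIntegral.integral_of_le hab]
  refine ⟨hint.integral_prod_right, ?_⟩
  rw [← integral_prod_symm _ hint, integral_prod _ hint]
  simp only [integral_const_mul, (hf.comp_sub_right _).2, integral_mul_const]

end IntegratesTo

lemma integrable_pow_mul_exp_neg_sq_div {s : ℝ} (hs : 0 < s) (k : ℕ) :
    Integrable fun x : ℝ => x ^ k * Real.exp (-x ^ 2 / (2 * s)) := by
  have h := integrable_rpow_mul_exp_neg_mul_sq (b := (2 * s)⁻¹) (by positivity)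
    (s := (k : ℝ)) (by have : (0 : ℝ) ≤ k := k.cast_nonneg
                       linarith)
  refine h.congr (Filter.Eventually.of_forall fun x => ?_)
  simp only [Real.rpow_natCast]
  congr 2
  ring

lemma integratesTo_exp_neg_sq_div {s : ℝ} (hs : 0 < s) :
    IntegratesTo (fun x : ℝ => Real.exp (-x ^ 2 / (2 * s))) (√(2 * π * s)) := by
  refine ⟨by simpa using integrable_pow_mul_exp_neg_sq_div hs 0, ?_⟩
  have h := integral_gaussian (2 * s)⁻¹
  rw [show π / (2 * s)⁻¹ = 2 * π * s by field_simp] at h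
  rw [← h]
  refine integral_congr_ae (Filter.Eventually.of_forall fun x => ?_)
  simp only [neg_mul, mul_neg, div_eq_inv_mul]

lemma hasDerivAt_exp_neg_sq_div {s : ℝ} (hs : 0 < s) (x : ℝ) :
    HasDerivAt (fun x : ℝ => Real.exp (-x ^ 2 / (2 * s)))
      (-(x / s) * Real.exp (-x ^ 2 / (2 * s))) x := by
  have h : HasDerivAt (fun x : ℝ => -x ^ 2 / (2 * s)) (-(x / s)) x := by
    convert! (((hasDerivAt_id x).pow 2).neg).div_const (2 * s) using 1
    simp
    field_simp
  convert! h.exp using 1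
  ring

/-- Odd moments vanish. -/
lemma integratesTo_odd_pow_mul_exp {s : ℝ} (hs : 0 < s) {k : ℕ} (hk : Odd k) :
    IntegratesTo (fun x : ℝ => x ^ k * Real.exp (-x ^ 2 / (2 * s))) 0 := by
  refine ⟨integrable_pow_mul_exp_neg_sq_div hs k, ?_⟩
  have h := integral_neg_eq_self (fun x : ℝ => x ^ k * Real.exp (-x ^ 2 / (2 * s))) volume
  simp only [hk.neg_pow, neg_mul, even_two.neg_pow, integral_neg] at h
  linarith

lemma integratesTo_sq_mul_exp {s : ℝ} (hs : 0 < s) :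
    IntegratesTo (fun x : ℝ => x ^ 2 * Real.exp (-x ^ 2 / (2 * s))) (s * √(2 * π * s)) := by
  have h0 := integratesTo_exp_neg_sq_div hs
  have h2 := integrable_pow_mul_exp_neg_sq_div hs 2
  refine ⟨h2, ?_⟩
  have h := integral_eq_zero_of_hasDerivAt_of_integrable
    (f := fun x : ℝ => x * Real.exp (-x ^ 2 / (2 * s)))
    (f' := fun x : ℝ => Real.exp (-x ^ 2 / (2 * s))
      - s⁻¹ * (x ^ 2 * Real.exp (-x ^ 2 / (2 * s))))
    (fun x => by
      convert! (hasDerivAt_id x).mul (hasDerivAt_exp_neg_sq_div hs x) using 1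
      simp
      ring)
    (h0.1.sub (h2.const_mul _)) (by simpa using integrable_pow_mul_exp_neg_sq_div hs 1)
  rw [integral_sub h0.1 (h2.const_mul _), h0.2, integral_const_mul] at h
  rw [sub_eq_zero, inv_mul_eq_div, eq_div_iff hs.ne'] at h
  rw [← h, mul_comm]

/-- Integral of a cubic polynomial in the centred variable against a Gaussian weight. -/
lemma integratesTo_cubic_mul_exp {s : ℝ} (hs : 0 < s) (c₀ c₁ c₂ c₃ m : ℝ) :
    IntegratesTo (fun x : ℝ => (c₀ + c₁ * (x - m) + c₂ * (x - m) ^ 2 + c₃ * (x - m) ^ 3)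
      * Real.exp (-(x - m) ^ 2 / (2 * s))) ((c₀ + c₂ * s) * √(2 * π * s)) := by
  have h := ((((integratesTo_exp_neg_sq_div hs).const_mul c₀).add
    ((integratesTo_odd_pow_mul_exp hs (k := 1) (by decide)).const_mul c₁)).add
    ((integratesTo_sq_mul_exp hs).const_mul c₂)).add
    ((integratesTo_odd_pow_mul_exp hs (k := 3) (by decide)).const_mul c₃)
  exact (h.comp_sub_right m).congr (fun x => by ring) (by ring)

/-- First moment of a weighted family of Gaussian derivatives with moving means. -/
lemma integratesTo_intervalIntegral_mul_gaussian_deriv {s : ℝ} (hs : 0 < s) (z : ℝ)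
    {A n : ℝ → ℝ} {a b : ℝ} (hab : a ≤ b) (hA : ContinuousOn A (Set.Icc a b))
    (hn : Continuous n) :
    IntegratesTo (fun x => (x - z) * ∫ t in a..b, A t * ((x - n t) / s *
      Real.exp (-(x - n t) ^ 2 / (2 * s)))) ((∫ t in a..b, A t) * √(2 * π * s)) := by
  have h1 := (integratesTo_odd_pow_mul_exp hs (k := 1) (by decide)).intervalIntegral_translates
    (A := fun t => (n t - z) / s * A t) (n := n) hab (by fun_prop) hn
  have h2 := (integratesTo_sq_mul_exp hs).intervalIntegral_translates
    (A := fun t => s⁻¹ * A t) (n := n) hab (by fun_prop) hn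
  refine (h1.add h2).congr (fun x => ?_) ?_
  · rw [← intervalIntegral.integral_const_mul, ← intervalIntegral.integral_add]
    · congr 1
      ext t
      ring
    all_goals
      refine ContinuousOn.intervalIntegrable ?_
      rw [Set.uIcc_of_le hab]
      fun_prop
  · rw [intervalIntegral.integral_const_mul]
    field_simp
    ring

/-- Factorization of the bivariate density as marginal times conditional density. -/
lemma gauss2_eq {r ρ q : ℝ} (hr : 0 < r) (hD : 0 < r * q - ρ ^ 2) (a b : ℝ) :
    gauss2 a b r ρ q = (2 * π * √(r * q - ρ ^ 2))⁻¹ * (Real.exp (-a ^ 2 / (2 * r)) *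
      Real.exp (-(b - ρ / r * a) ^ 2 / (2 * ((r * q - ρ ^ 2) / r)))) := by
  unfold gauss2
  rw [← Real.exp_add]
  obtain ⟨D, hDdef⟩ : ∃ D, D = r * q - ρ ^ 2 := ⟨_, rfl⟩
  have hq : q = (D + ρ ^ 2) / r := by
    rw [hDdef]
    field_simp
    ring
  rw [← hDdef] at hD ⊢
  congr 2
  rw [hq]
  field_simp
  ring

lemma gaussian_normalization {r D : ℝ} (hr : 0 < r) (hD : 0 < D) :
    (2 * π * √D)⁻¹ * √(2 * π * (D / r)) * √(2 * π * r) = 1 := by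
  rw [mul_assoc, ← Real.sqrt_mul (by positivity),
    show 2 * π * (D / r) * (2 * π * r) = (2 * π) ^ 2 * D by field_simp,
    Real.sqrt_mul (by positivity), Real.sqrt_sq (by positivity)]
  have := Real.sqrt_pos.2 hD
  have := Real.pi_pos
  field_simp

section Continuity

variable {α σ γ ystar : ℝ → ℝ}

lemma continuous_phiR (hα : Continuous α) : Continuous fun p : ℝ × ℝ => phiR α p.1 p.2 := by
  have h : ∀ a b, IntervalIntegrable α volume a b := fun a b => hα.intervalIntegrable a b
  have h0 : Continuous fun x => ∫ u in (0 : ℝ)..x, α u := intervalIntegral.continuous_primitive h 0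
  have he : (fun p : ℝ × ℝ => phiR α p.1 p.2) = fun p : ℝ × ℝ =>
      Real.exp (-((∫ u in (0 : ℝ)..p.2, α u) - ∫ u in (0 : ℝ)..p.1, α u)) := by
    ext p
    rw [intervalIntegral.integral_interval_sub_left (h _ _) (h _ _), phiR]
  rw [he]
  fun_prop

lemma continuous_phiR_right (hα : Continuous α) (t : ℝ) : Continuous (phiR α t) :=
  (continuous_phiR hα).comp (Continuous.prodMk_right t)

lemma continuous_Srr (hα : Continuous α) (hσ : Continuous σ) (t : ℝ) :
    Continuous (Srr α σ t) := by
  have h : Continuous fun p : ℝ × ℝ => phiR α p.2 p.1 :=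
    (continuous_phiR hα).comp continuous_swap
  exact intervalIntegral.continuous_parametric_intervalIntegral_of_continuous
    (f := fun v u => (phiR α u v) ^ 2 * (σ u) ^ 2)
    (by unfold Function.uncurry; fun_prop) continuous_id

lemma continuous_psiR (hα : Continuous α) (hσ : Continuous σ) (hγ : Continuous γ) (t : ℝ) :
    Continuous (psiR α σ γ t) := by
  have := continuous_Srr hα hσ t
  unfold psiR
  fun_prop

lemma continuous_Srz (hα : Continuous α) (hσ : Continuous σ) (hγ : Continuous γ) (t : ℝ) :
    Continuous (Srz α σ γ t) := by
  have h : Continuous fun p : ℝ × ℝ => phiR α p.2 p.1 :=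
    (continuous_phiR hα).comp continuous_swap
  have := continuous_Srr hα hσ t
  have := continuous_psiR hα hσ hγ t
  exact intervalIntegral.continuous_parametric_intervalIntegral_of_continuous
    (f := fun v u => psiR α σ γ t u * phiR α u v * Srr α σ t u)
    (by unfold Function.uncurry; fun_prop) continuous_id

lemma continuous_Bstar (hα : Continuous α) (hσ : Continuous σ) (hγ : Continuous γ) (t : ℝ) :
    Continuous (Bstar α σ γ t) := by
  have := continuous_phiR_right hα t
  have := continuous_psiR hα hσ hγ t
  exact intervalIntegral.continuous_primitive
    (fun a b => Continuous.intervalIntegrable (by fun_prop) a b) t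

lemma continuous_dY (hα : Continuous α) (hσ : Continuous σ) (hγ : Continuous γ) (t : ℝ) :
    Continuous (dY α σ γ t) :=
  (hγ.mul (continuous_Srr hα hσ t)).div (continuous_phiR_right hα t)
    fun _ => (Real.exp_pos _).ne'

lemma continuous_dZ (hα : Continuous α) (hσ : Continuous σ) (hγ : Continuous γ) (t : ℝ) :
    Continuous (dZ α σ γ t) := by
  have := continuous_Srz hα hσ hγ t
  have := continuous_Bstar hα hσ hγ t
  have := continuous_dY hα hσ hγ t
  unfold dZ
  fun_prop

lemma continuousOn_Rplus (hα : Continuous α) (hσ : Continuous σ) (hγ : Continuous γ)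
    (hys : Continuous ystar) (y t : ℝ) {S : Set ℝ} (hpos : ∀ u ∈ S, 0 < γ u) :
    ContinuousOn (Rplus α σ γ ystar y t) S := by
  have := continuous_phiR_right hα t
  have := continuous_Srr hα hσ t
  refine ContinuousOn.div (by fun_prop) (by fun_prop) fun u hu => ?_
  have := hpos u hu
  positivity

lemma continuousOn_Rminus (hα : Continuous α) (hσ : Continuous σ) (hγ : Continuous γ)
    (hys : Continuous ystar) (y t : ℝ) {S : Set ℝ} (hpos : ∀ u ∈ S, 0 < γ u) :
    ContinuousOn (Rminus α σ γ ystar y t) S := by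
  have := continuous_phiR_right hα t
  have := continuous_Srr hα hσ t
  refine ContinuousOn.div (by fun_prop) (by fun_prop) fun u hu => ?_
  have := hpos u hu
  positivity

end Continuity

section GreenFunction

/-- Variance of `ζ` given `η` under `G₀`. -/
noncomputable def condVar (α σ γ : ℝ → ℝ) (t v : ℝ) : ℝ :=
  (Srr α σ t v * Szz α σ γ t v - Srz α σ γ t v ^ 2) / Srr α σ t v

/-- Mean of `ζ` given `η` under `G₀`. -/
noncomputable def condMean (α σ γ : ℝ → ℝ) (y z t η v : ℝ) : ℝ :=
  z + muStar α σ γ y t v + Srz α σ γ t v / Srr α σ t v * (η - phiR α t v * y)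

/-- The factor of `G₀` that depends on `η` only. -/
noncomputable def etaWeight (α σ γ : ℝ → ℝ) (y t η v : ℝ) : ℝ :=
  (2 * π * √(Srr α σ t v * Szz α σ γ t v - Srz α σ γ t v ^ 2))⁻¹ *
    Real.exp (-(η - phiR α t v * y) ^ 2 / (2 * Srr α σ t v))

variable {α σ γ : ℝ → ℝ} {t v : ℝ}

lemma condVar_pos (hr : 0 < Srr α σ t v)
    (hD : 0 < Srr α σ t v * Szz α σ γ t v - Srz α σ γ t v ^ 2) : 0 < condVar α σ γ t v :=
  div_pos hD hr

lemma G0_eq (hr : 0 < Srr α σ t v)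
    (hD : 0 < Srr α σ t v * Szz α σ γ t v - Srz α σ γ t v ^ 2) (y z η ζ : ℝ) :
    G0 α σ γ y z t η ζ v = etaWeight α σ γ y t η v *
      Real.exp (-(ζ - condMean α σ γ y z t η v) ^ 2 / (2 * condVar α σ γ t v)) := by
  rw [G0, gauss2_eq hr hD, etaWeight, condMean, condVar, ← mul_assoc,
    sub_add_eq_sub_sub, sub_add_eq_sub_sub]

lemma dzG0_eq (hr : 0 < Srr α σ t v)
    (hD : 0 < Srr α σ t v * Szz α σ γ t v - Srz α σ γ t v ^ 2) (y z η ζ : ℝ) :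
    dzG0 α σ γ y z t η ζ v = etaWeight α σ γ y t η v *
      ((ζ - condMean α σ γ y z t η v) / condVar α σ γ t v *
        Real.exp (-(ζ - condMean α σ γ y z t η v) ^ 2 / (2 * condVar α σ γ t v))) := by
  simp only [dzG0, G0_eq hr hD]
  have hm : HasDerivAt (fun z' => ζ - condMean α σ γ y z' t η v) (-1) z := by
    unfold condMean
    exact (((hasDerivAt_id z).add_const _).add_const _).const_sub ζ
  have h := ((hasDerivAt_exp_neg_sq_div (condVar_pos hr hD) _).comp z hm).const_mul
    (etaWeight α σ γ y t η v)
  refine h.deriv.trans ?_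
  ring

lemma hasDerivAt_div_mul_exp_neg_sq_div {s : ℝ} (hs : 0 < s) (x : ℝ) :
    HasDerivAt (fun x : ℝ => x / s * Real.exp (-x ^ 2 / (2 * s)))
      ((1 / s - x ^ 2 / s ^ 2) * Real.exp (-x ^ 2 / (2 * s))) x := by
  convert! ((hasDerivAt_id x).div_const s).mul (hasDerivAt_exp_neg_sq_div hs x) using 1
  simp only [id]
  ring

lemma dzzG0_eq (hr : 0 < Srr α σ t v)
    (hD : 0 < Srr α σ t v * Szz α σ γ t v - Srz α σ γ t v ^ 2) (y z η ζ : ℝ) :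
    dzzG0 α σ γ y z t η ζ v = etaWeight α σ γ y t η v *
      (((ζ - condMean α σ γ y z t η v) ^ 2 / condVar α σ γ t v ^ 2 - 1 / condVar α σ γ t v) *
        Real.exp (-(ζ - condMean α σ γ y z t η v) ^ 2 / (2 * condVar α σ γ t v))) := by
  simp only [dzzG0, dzG0_eq hr hD]
  have hm : HasDerivAt (fun z' => ζ - condMean α σ γ y z' t η v) (-1) z := by
    unfold condMean
    exact (((hasDerivAt_id z).add_const _).add_const _).const_sub ζ
  have h := ((hasDerivAt_div_mul_exp_neg_sq_div (condVar_pos hr hD) _).comp z hm).const_mul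
    (etaWeight α σ γ y t η v)
  refine h.deriv.trans ?_
  ring

lemma dydzG0_eq (hr : 0 < Srr α σ t v)
    (hD : 0 < Srr α σ t v * Szz α σ γ t v - Srz α σ γ t v ^ 2) (y z η ζ : ℝ) :
    dydzG0 α σ γ y z t η ζ v = etaWeight α σ γ y t η v *
      ((phiR α t v * (η - phiR α t v * y) / Srr α σ t v *
          ((ζ - condMean α σ γ y z t η v) / condVar α σ γ t v) +
        (Srz α σ γ t v / Srr α σ t v * phiR α t v - Bstar α σ γ t v) *
          (1 / condVar α σ γ t v - (ζ - condMean α σ γ y z t η v) ^ 2 / condVar α σ γ t v ^ 2)) *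
        Real.exp (-(ζ - condMean α σ γ y z t η v) ^ 2 / (2 * condVar α σ γ t v))) := by
  simp only [dydzG0, dzG0_eq hr hD]
  have ha : HasDerivAt (fun y' => η - phiR α t v * y') (-phiR α t v) y := by
    simpa using ((hasDerivAt_id y).const_mul (phiR α t v)).const_sub η
  have hμ : HasDerivAt (fun y' => muStar α σ γ y' t v) (Bstar α σ γ t v) y := by
    unfold muStar
    simpa using (((hasDerivAt_id y).add_const (Srz α σ γ 0 t)).const_mul
      (Bstar α σ γ t v)).add_const ((1 / 2) * (Bstar α σ γ t v) ^ 2 * Srr α σ 0 t)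
  have hm : HasDerivAt (fun y' => ζ - condMean α σ γ y' z t η v)
      (-(Bstar α σ γ t v + Srz α σ γ t v / Srr α σ t v * -phiR α t v)) y := by
    unfold condMean
    exact ((hμ.const_add z).add (ha.const_mul _)).const_sub ζ
  have hw : HasDerivAt (fun y' => etaWeight α σ γ y' t η v)
      (etaWeight α σ γ y t η v * (phiR α t v * (η - phiR α t v * y) / Srr α σ t v)) y := by
    convert! ((hasDerivAt_exp_neg_sq_div hr _).comp y ha).const_mul _ using 1
    rw [etaWeight]
    ring
  have h := hw.mul ((hasDerivAt_div_mul_exp_neg_sq_div (condVar_pos hr hD) _).comp y hm)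
  refine h.deriv.trans ?_
  simp only [Function.comp_apply]
  ring

/-- The three shift-free terms of `G₁` have an explicit first `ζ`-moment. -/
lemma integratesTo_mul_static_terms (hr : 0 < Srr α σ t v)
    (hD : 0 < Srr α σ t v * Szz α σ γ t v - Srz α σ γ t v ^ 2) (m y z η : ℝ) :
    IntegratesTo (fun ζ => (ζ - z) * (m * dzG0 α σ γ y z t η ζ v
        - (Srz α σ γ t v / phiR α t v) *
          (dydzG0 α σ γ y z t η ζ v - Bstar α σ γ t v * dzzG0 α σ γ y z t η ζ v)
        - Szz α σ γ t v * dzzG0 α σ γ y z t η ζ v))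
      ((m - Srz α σ γ t v / Srr α σ t v * (η - phiR α t v * y)) *
        etaWeight α σ γ y t η v * √(2 * π * condVar α σ γ t v)) := by
  have hs := condVar_pos hr hD
  have hφ : phiR α t v ≠ 0 := (Real.exp_pos _).ne'
  simp only [dzG0_eq hr hD, dzzG0_eq hr hD, dydzG0_eq hr hD]
  generalize condVar α σ γ t v = s at *
  generalize condMean α σ γ y z t η v = n
  generalize etaWeight α σ γ y t η v = w
  generalize Bstar α σ γ t v = B
  generalize Szz α σ γ t v = q
  generalize Srr α σ t v = r at *
  generalize Srz α σ γ t v = ρ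
  generalize phiR α t v = φ at *
  obtain ⟨c, hc⟩ : ∃ c, c = n - z := ⟨_, rfl⟩
  obtain ⟨l, hl⟩ : ∃ l, l = w * (m - ρ * (η - φ * y) / r) / s := ⟨_, rfl⟩
  obtain ⟨k, hk⟩ : ∃ k, k = w * (q - ρ ^ 2 / r) := ⟨_, rfl⟩
  refine (integratesTo_cubic_mul_exp hs (c * k / s) (l * c + k / s) (l - c * k / s ^ 2)
    (-(k / s ^ 2)) n).congr (fun ζ => ?_) ?_
  · rw [← mul_assoc w, ← mul_assoc w, ← mul_assoc w]
    rw [hk, hl, hc]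
    generalize Real.exp (-(ζ - n) ^ 2 / (2 * s)) = e
    field_simp
    ring
  · rw [hk, hl]
    field_simp
    ring

lemma integratesTo_mul_shifted_term (hr : 0 < Srr α σ t v)
    (hD : 0 < Srr α σ t v * Szz α σ γ t v - Srz α σ γ t v ^ 2) (htv : t ≤ v) {R Y Z : ℝ → ℝ}
    (hR : ContinuousOn R (Set.Icc t v)) (hY : Continuous Y) (hZ : Continuous Z) (z η : ℝ) :
    IntegratesTo (fun ζ => (ζ - z) * ∫ u in t..v, R u * dzG0 α σ γ (Y u) (Z u) t η ζ v)
      ((∫ u in t..v, R u * etaWeight α σ γ (Y u) t η v) * √(2 * π * condVar α σ γ t v)) := by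
  simp only [dzG0_eq hr hD, ← mul_assoc (R _)]
  refine integratesTo_intervalIntegral_mul_gaussian_deriv (condVar_pos hr hD) z htv ?_ ?_
  · unfold etaWeight
    fun_prop
  · unfold condMean muStar
    fun_prop

lemma intervalIntegrable_mul_dzG0 (hr : 0 < Srr α σ t v)
    (hD : 0 < Srr α σ t v * Szz α σ γ t v - Srz α σ γ t v ^ 2) (htv : t ≤ v) {R Y Z : ℝ → ℝ}
    (hR : ContinuousOn R (Set.Icc t v)) (hY : Continuous Y) (hZ : Continuous Z) (η ζ : ℝ) :
    IntervalIntegrable (fun u => R u * dzG0 α σ γ (Y u) (Z u) t η ζ v) volume t v := by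
  simp only [dzG0_eq hr hD]
  refine ContinuousOn.intervalIntegrable ?_
  rw [Set.uIcc_of_le htv]
  unfold etaWeight condMean muStar
  fun_prop

/-- The total mass in `η` does not depend on the shift `Y`. -/
lemma integratesTo_shifted_etaWeight (hr : 0 < Srr α σ t v)
    (hD : 0 < Srr α σ t v * Szz α σ γ t v - Srz α σ γ t v ^ 2) (htv : t ≤ v) {R Y : ℝ → ℝ}
    (hR : ContinuousOn R (Set.Icc t v)) (hY : Continuous Y) :
    IntegratesTo (fun η => (∫ u in t..v, R u * etaWeight α σ γ (Y u) t η v) *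
      √(2 * π * condVar α σ γ t v)) (∫ u in t..v, R u) := by
  have hn := gaussian_normalization hr hD
  have h := ((integratesTo_exp_neg_sq_div hr).intervalIntegral_translates
    (n := fun u => phiR α t v * Y u) htv hR (by fun_prop)).const_mul
    ((2 * π * √(Srr α σ t v * Szz α σ γ t v - Srz α σ γ t v ^ 2))⁻¹ *
      √(2 * π * condVar α σ γ t v))
  refine h.congr (fun η => ?_) ?_
  · rw [← intervalIntegral.integral_const_mul, ← intervalIntegral.integral_mul_const]
    congr 1
    ext u
    rw [etaWeight]
    ring
  · rw [condVar, mul_left_comm, hn, mul_one]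

lemma integratesTo_static_etaWeight (hr : 0 < Srr α σ t v)
    (hD : 0 < Srr α σ t v * Szz α σ γ t v - Srz α σ γ t v ^ 2) (m k y : ℝ) :
    IntegratesTo (fun η => (m - k * (η - phiR α t v * y)) * etaWeight α σ γ y t η v *
      √(2 * π * condVar α σ γ t v)) m := by
  have hn := gaussian_normalization hr hD
  have h := (integratesTo_cubic_mul_exp hr m (-k) 0 0 (phiR α t v * y)).const_mul
    ((2 * π * √(Srr α σ t v * Szz α σ γ t v - Srz α σ γ t v ^ 2))⁻¹ *
      √(2 * π * condVar α σ γ t v))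
  refine h.congr (fun η => ?_) ?_
  · rw [etaWeight]
    ring
  · rw [condVar, mul_left_comm, hn]
    ring

end GreenFunction

theorem sofr_1M_first_order_at_T1 (α σ γ ystar R1star : ℝ → ℝ)
    (hα : Continuous α) (hσc : Continuous σ) (hγc : Continuous γ)
    (hys : Continuous ystar) (hR1 : Continuous R1star)
    (T₁ T₂ y z : ℝ) (h12 : T₁ < T₂)
    (hPD : (!![Srr α σ T₁ T₂, Srz α σ γ T₁ T₂;
               Srz α σ γ T₁ T₂, Szz α σ γ T₁ T₂]).PosDef)
    (hγ : ∀ u ∈ Set.Icc T₁ T₂, 0 < γ u) :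
    (∫ η : ℝ, ∫ ζ : ℝ, (ζ - z) * G1 α σ γ ystar R1star y z T₁ η ζ T₂)
      = (∫ t₁ in T₁..T₂,
            (Rplus α σ γ ystar y T₁ t₁ - Rminus α σ γ ystar y T₁ t₁ + R1star t₁))
          - muStar α σ γ y T₁ T₂ := by
  have hr : 0 < Srr α σ T₁ T₂ := by simpa using hPD.diag_pos (i := 0)
  have hD : 0 < Srr α σ T₁ T₂ * Szz α σ γ T₁ T₂ - Srz α σ γ T₁ T₂ ^ 2 := by
    have h := hPD.det_pos
    rw [Matrix.det_fin_two_of] at h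
    rwa [sq]
  have hle := h12.le
  have hY := continuous_dY hα hσc hγc T₁
  have hZ := continuous_dZ hα hσc hγc T₁
  have hYp : Continuous fun u => y + dY α σ γ T₁ u := by fun_prop
  have hYm : Continuous fun u => y - dY α σ γ T₁ u := by fun_prop
  have hZp : Continuous fun u => z + dZ α σ γ T₁ u := by fun_prop
  have hZm : Continuous fun u => z - dZ α σ γ T₁ u := by fun_prop
  have hRp := continuousOn_Rplus hα hσc hγc hys y T₁ hγ
  have hRm := continuousOn_Rminus hα hσc hγc hys y T₁ hγ
  have hI : ∀ {R : ℝ → ℝ}, ContinuousOn R (Set.Icc T₁ T₂) →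
      IntervalIntegrable R volume T₁ T₂ := fun hR =>
    ContinuousOn.intervalIntegrable (by rwa [Set.uIcc_of_le hle])
  have hinner : ∀ η, ∫ ζ, (ζ - z) * G1 α σ γ ystar R1star y z T₁ η ζ T₂ = _ := fun η =>
    ((((integratesTo_mul_shifted_term hr hD hle hRp hYp hZp z η).sub
      (integratesTo_mul_shifted_term hr hD hle hRm hYm hZm z η)).add
      (integratesTo_mul_static_terms hr hD
        ((∫ u in T₁..T₂, R1star u) - muStar α σ γ y T₁ T₂) y z η)).congr (fun ζ => by
        have hp := intervalIntegrable_mul_dzG0 hr hD hle hRp hYp hZp η ζ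
        have hm := intervalIntegrable_mul_dzG0 hr hD hle hRm hYm hZm η ζ
        rw [G1, intervalIntegral.integral_add (hp.sub hm)
            ((hR1.intervalIntegrable _ _).mul_const _),
          intervalIntegral.integral_sub hp hm, intervalIntegral.integral_mul_const]
        ring) rfl).2
  simp only [hinner]
  refine (((integratesTo_shifted_etaWeight hr hD hle hRp hYp).sub
    (integratesTo_shifted_etaWeight hr hD hle hRm hYm)).add
    (integratesTo_static_etaWeight hr hD _ _ y)).2.trans ?_
  rw [intervalIntegral.integral_add ((hI hRp).sub (hI hRm)) (hI hR1.continuousOn),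
    intervalIntegral.integral_sub (hI hRp) (hI hRm)]
  ring
end

section
/- For all real numbers t ≤ u ≤ v, the variance function satisfies the flow decomposition Σ_rr(t,v) = φ_r(u,v)² · Σ_rr(t,u) + Σ_rr(u,v). -/
open MeasureTheory Real

theorem phiR_mul_phiR {α : ℝ → ℝ} (hα : Continuous α) (s u v : ℝ) :
    phiR α s u * phiR α u v = phiR α s v := by
  unfold phiR
  rw [← Real.exp_add, ← intervalIntegral.integral_add_adjacent_intervals
    (hα.intervalIntegrable s u) (hα.intervalIntegrable u v), neg_add]

theorem continuous_phiR_left {α : ℝ → ℝ} (hα : Continuous α) (v : ℝ) :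
    Continuous fun s => phiR α s v := by
  simp only [phiR, ← intervalIntegral.integral_symm]
  exact Real.continuous_exp.comp
    (intervalIntegral.continuous_primitive (fun a b => hα.intervalIntegrable a b) v)

theorem Srr_flow (α σ : ℝ → ℝ)
    (hα : Continuous α) (hσc : Continuous σ)
    (t u v : ℝ) (h1 : t ≤ u) (h2 : u ≤ v) :
    Srr α σ t v = (phiR α u v) ^ 2 * Srr α σ t u + Srr α σ u v := by
  have hc : Continuous fun s => (phiR α s v) ^ 2 * (σ s) ^ 2 :=
    ((continuous_phiR_left hα v).pow 2).mul (hσc.pow 2)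
  unfold Srr
  rw [← intervalIntegral.integral_add_adjacent_intervals
    (hc.intervalIntegrable t u) (hc.intervalIntegrable u v),
    ← intervalIntegral.integral_const_mul]
  congr 1
  refine intervalIntegral.integral_congr fun s _ => ?_
  simp only [← phiR_mul_phiR hα s u v]
  ring
end
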